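/- Under the decoy-state assumptions with error rates, if L is a real number with 0 < L ≤ Y(1), then the single-photon error rate satisfies e(1) ≤ (EQ(ν₁)·e^{ν₁} − EQ(ν₂)·e^{ν₂}) / ((ν₁ − ν₂)·L). -/

import Mathlib

/-- The gain for intensity `m` with yields `Y`: Poisson average of the yields. -/
noncomputable def decoyGain (Y : ℕ → ℝ) (m : ℝ) : ℝ :=
  ∑' i : ℕ, Real.exp (-m) * m ^ i / (Nat.factorial i) * Y i

/-- The error-weighted gain for intensity `m` with yields `Y` and error rates `e`. -/
noncomputable def decoyErrGain (Y e : ℕ → ℝ) (m : ℝ) : ℝ :=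
  ∑' i : ℕ, Real.exp (-m) * m ^ i / (Nat.factorial i) * (e i * Y i)

/-!
Multiplying a gain by `exp m` cancels the Poisson normalisation and leaves the power series
`∑ mⁱ / i! * Yᵢ`. Its coefficients are nonnegative, so every term grows with the intensity, and the
difference of two such series dominates the difference of their single-photon terms,
`(ν₁ - ν₂) * Y₁`. The error-weighted gain is the gain of the yields `eᵢ * Yᵢ`.
-/

open Real
open scoped Nat

section PowDivFactorial

variable {a : ℕ → ℝ} {m n : ℝ}

lemma summable_pow_div_factorial_mul_of_abs_le {C : ℝ} (ha : ∀ i, |a i| ≤ C) (m : ℝ) :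
    Summable fun i ↦ m ^ i / i ! * a i := by
  refine .of_norm_bounded ((summable_pow_div_factorial m).abs.mul_right C) fun i ↦ ?_
  rw [norm_eq_abs, abs_mul]
  gcongr
  exact ha i

lemma summable_pow_div_factorial_mul_of_abs_le_abs (hnm : |n| ≤ |m|)
    (hm : Summable fun i ↦ m ^ i / i ! * a i) : Summable fun i ↦ n ^ i / i ! * a i := by
  refine .of_norm_bounded hm.abs fun i ↦ ?_
  rw [norm_eq_abs, abs_mul, abs_mul, abs_div, abs_div, abs_pow, abs_pow]
  gcongr

lemma sub_le_tsum_pow_div_factorial_mul_sub (ha : ∀ i, 0 ≤ a i) (hn : 0 ≤ n) (hnm : n ≤ m)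
    (hm : Summable fun i ↦ m ^ i / i ! * a i) (k : ℕ) :
    m ^ k / k ! * a k - n ^ k / k ! * a k ≤
      ∑' i, m ^ i / i ! * a i - ∑' i, n ^ i / i ! * a i := by
  have hn_summable : Summable fun i ↦ n ^ i / i ! * a i :=
    summable_pow_div_factorial_mul_of_abs_le_abs (abs_le_abs_of_nonneg hn hnm) hm
  have term_mono (i : ℕ) : n ^ i / i ! * a i ≤ m ^ i / i ! * a i := by
    have := ha i
    gcongr
  rw [← hm.tsum_sub hn_summable]
  exact (hm.sub hn_summable).le_tsum k fun i _ ↦ sub_nonneg.2 (term_mono i)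

end PowDivFactorial

lemma decoyErrGain_eq_decoyGain (Y e : ℕ → ℝ) (m : ℝ) :
    decoyErrGain Y e m = decoyGain (fun i ↦ e i * Y i) m :=
  rfl

lemma decoyGain_mul_exp (Y : ℕ → ℝ) (m : ℝ) :
    decoyGain Y m * exp m = ∑' i, m ^ i / i ! * Y i := by
  rw [decoyGain, ← tsum_mul_right]
  refine tsum_congr fun i ↦ ?_
  rw [exp_neg]
  field_simp

lemma sub_mul_le_decoyGain_mul_exp_sub {Y : ℕ → ℝ} {m n : ℝ} (hY : ∀ i, 0 ≤ Y i) (hn : 0 ≤ n)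
    (hnm : n ≤ m) (hm : Summable fun i ↦ m ^ i / i ! * Y i) :
    (m - n) * Y 1 ≤ decoyGain Y m * exp m - decoyGain Y n * exp n := by
  rw [decoyGain_mul_exp, decoyGain_mul_exp]
  simpa [sub_mul] using sub_le_tsum_pow_div_factorial_mul_sub hY hn hnm hm 1

theorem single_photon_error_upper_bound_general {Y e : ℕ → ℝ} (heY : ∀ i, 0 ≤ e i * Y i)
    {ν₁ ν₂ : ℝ} (hν₂ : 0 ≤ ν₂) (hν : ν₂ < ν₁)
    (hsum : Summable fun i ↦ ν₁ ^ i / i ! * (e i * Y i))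
    {L : ℝ} (hL : 0 < L) (hLY : L ≤ Y 1) :
    e 1 ≤ (decoyErrGain Y e ν₁ * exp ν₁ - decoyErrGain Y e ν₂ * exp ν₂) / ((ν₁ - ν₂) * L) := by
  have hν_sub : 0 < ν₁ - ν₂ := sub_pos.2 hν
  have he₁ : 0 ≤ e 1 := nonneg_of_mul_nonneg_left (heY 1) (hL.trans_le hLY)
  rw [le_div_iff₀ (mul_pos hν_sub hL)]
  calc e 1 * ((ν₁ - ν₂) * L) = (ν₁ - ν₂) * (e 1 * L) := by ring
    _ ≤ (ν₁ - ν₂) * (e 1 * Y 1) := by gcongr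
    _ ≤ decoyErrGain Y e ν₁ * exp ν₁ - decoyErrGain Y e ν₂ * exp ν₂ := by
      simp only [decoyErrGain_eq_decoyGain]
      exact sub_mul_le_decoyGain_mul_exp_sub heY hν₂ hν.le hsum

theorem single_photon_error_upper_bound (Y e : ℕ → ℝ)
    (hY : ∀ i, 0 ≤ Y i ∧ Y i ≤ 1) (he : ∀ i, 0 ≤ e i ∧ e i ≤ 1)
    (μ ν₁ ν₂ : ℝ) (hν₂ : 0 ≤ ν₂) (hν : ν₂ < ν₁) (hμ : ν₁ + ν₂ < μ)
    (L : ℝ) (hL : 0 < L) (hLY : L ≤ Y 1) :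
    e 1 ≤ (decoyErrGain Y e ν₁ * Real.exp ν₁ - decoyErrGain Y e ν₂ * Real.exp ν₂)
            / ((ν₁ - ν₂) * L) := by
  have heY (i : ℕ) : e i * Y i ∈ Set.Icc 0 1 := unitInterval.mul_mem (he i) (hY i)
  exact single_photon_error_upper_bound_general (fun i ↦ (heY i).1) hν₂ hν
    (summable_pow_div_factorial_mul_of_abs_le
      (fun i ↦ (abs_of_nonneg (heY i).1).trans_le (heY i).2) ν₁) hL hLY
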